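/- For every internal state x ∈ 𝒯 and every y ∈ 𝒳, E[1_A · N(x,y) | X(0) = 0] = f(0,x) · E[1_A · N(x,y) | X(0) = x], where f(0,x) is the probability that the chain started at 0 visits x strictly before the absorption time T. -/

import Mathlib

open MeasureTheory ENNReal

noncomputable section

/-- The absorption time `T = inf {t > 0 : X t ∈ {0} ∪ F}` of a trajectory `ω`. -/
def absTime {S : Type*} (good : S) (F : Set S) (ω : ℕ → S) : ℕ∞ :=
  sInf {t : ℕ∞ | ∃ n : ℕ, t = (n : ℕ∞) ∧ 0 < n ∧ (ω n = good ∨ ω n ∈ F)}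

/-- The rare event `A = {X T ∈ F}`: the chain is absorbed in the bad set `F`. -/
def hitsF {S : Type*} (good : S) (F : Set S) (ω : ℕ → S) : Prop :=
  ∃ n : ℕ, absTime good F ω = (n : ℕ∞) ∧ ω n ∈ F

open Classical in
/-- `N(x,y)`: the number of transitions `x → y` strictly before the absorption time. -/
def transCount {S : Type*} (good : S) (F : Set S) (x y : S) (ω : ℕ → S) : ℝ≥0∞ :=
  ∑' t : ℕ, if (t : ℕ∞) < absTime good F ω ∧ ω t = x ∧ ω (t + 1) = y then 1 else 0

open Classical in
/-- The number of visits to `x` up to (and including) the absorption time. -/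
def visitCount {S : Type*} (good : S) (F : Set S) (x : S) (ω : ℕ → S) : ℝ≥0∞ :=
  ∑' t : ℕ, if (t : ℕ∞) ≤ absTime good F ω ∧ ω t = x then 1 else 0

open Classical in
/-- `γ̃(y)`: the hitting probability `γ(y)` for internal `y`, with the convention that it is
`1` on the bad set `F` and `0` at the good state. -/
def gammaTilde {S : Type*} [MeasurableSpace S] (good : S) (F : Set S)
    (ℙ : S → Measure (ℕ → S)) (y : S) : ℝ≥0∞ :=
  if y ∈ F then 1 else if y = good then 0 else ℙ y {ω | hitsF good F ω}

/-!
Decompose the paths according to the time of the first visit to `x` before absorption. At that time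
the Markov property restarts the chain from `x`, and neither `1_A` nor `N(x,y)` notices that the
past has been dropped: the absorption time is only translated, and no transition out of `x` has
occurred yet. On paths that do not visit `x` before absorption, `N(x,y) = 0`.
-/

section Path

variable {S : Type*} {good : S} {F : Set S} {ω : ℕ → S} {n : ℕ}

/-- The trajectory restarted at time `n`. -/
def shift (n : ℕ) (ω : ℕ → S) : ℕ → S := fun t => ω (t + n)

theorem exists_mem_cylinder_shift_eq {f h : ℕ → S} (hfh : h 0 = f n) :
    ∃ g ∈ PiNat.cylinder f (n + 1), shift n g = h := by
  refine ⟨fun t => if t < n then f t else h (t - n), fun t ht => ?_, ?_⟩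
  · rcases Nat.lt_succ_iff_lt_or_eq.1 ht with hlt | rfl
    · exact if_pos hlt
    · simpa using hfh
  · funext t
    simp [shift]

theorem cylinder_inter_preimage_shift_cylinder (g : ℕ → S) (n m : ℕ) :
    PiNat.cylinder g (n + 1) ∩ shift n ⁻¹' PiNat.cylinder (shift n g) (m + 1) =
      PiNat.cylinder g (n + m + 1) := by
  ext ω
  constructor
  · rintro ⟨hpast, hfuture⟩ t ht
    rcases lt_or_ge t n with htn | hnt
    · exact hpast t (by omega)
    · simpa [shift, Nat.sub_add_cancel hnt] using hfuture (t - n) (by omega)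
  · intro h
    exact ⟨fun t ht => h t (by omega), fun t ht => h (t + n) (by omega)⟩

theorem preimage_frestrictLe_singleton (f : ℕ → S) (n : ℕ) :
    Preorder.frestrictLe (π := fun _ => S) n ⁻¹' {Preorder.frestrictLe n f} =
      PiNat.cylinder f (n + 1) := by
  ext ω
  simp [funext_iff, PiNat.mem_cylinder_iff]

theorem natCast_le_absTime_iff {t : ℕ} :
    (t : ℕ∞) ≤ absTime good F ω ↔ ∀ s, 0 < s → s < t → ω s ∉ insert good F := by
  rw [absTime, le_sInf_iff]
  constructor
  · intro h s hs hst hmem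
    exact hst.not_ge (by exact_mod_cast h s ⟨s, rfl, hs, hmem⟩)
  · rintro h _ ⟨s, rfl, hs, hmem⟩
    exact_mod_cast not_lt.1 fun hst => h s hs hst hmem

theorem absTime_eq_hittingAfter (good : S) (F : Set S) :
    absTime good F = hittingAfter (fun t (ω : ℕ → S) => ω t) (insert good F) 1 := by
  funext ω
  refine ENat.eq_of_forall_natCast_le_iff fun t => ?_
  have hle : WithTop.some t ≤ hittingAfter (fun s (ω : ℕ → S) => ω s) (insert good F) 1 ω ↔
      ∀ s, 0 < s → s < t → ω s ∉ insert good F := by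
    rw [← not_lt, hittingAfter_lt_iff]
    simp only [Set.mem_Ico, not_exists, not_and, and_imp, Nat.succ_le_iff]
  exact natCast_le_absTime_iff.trans hle.symm

theorem absTime_shift_add (hn : (n : ℕ∞) < absTime good F ω) :
    absTime good F (shift n ω) + n = absTime good F ω := by
  refine ENat.eq_of_forall_natCast_le_iff fun t => ?_
  rcases le_or_gt t n with htn | hnt
  · have htn' : (t : ℕ∞) ≤ n := by exact_mod_cast htn
    exact iff_of_true (htn'.trans le_add_self) (htn'.trans hn.le)
  · obtain ⟨k, rfl⟩ := Nat.exists_eq_add_of_le' hnt.le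
    have hpast := natCast_le_absTime_iff (t := n + 1).1
      (by exact_mod_cast Order.add_one_le_of_lt hn)
    rw [Nat.cast_add, ENat.add_le_add_iff_right (ENat.natCast_ne_top n), ← Nat.cast_add,
      natCast_le_absTime_iff, natCast_le_absTime_iff]
    constructor
    · intro h s hs hsk
      rcases le_or_gt s n with hsn | hns
      · exact hpast s hs (by omega)
      · simpa [shift, Nat.sub_add_cancel hns.le] using h (s - n) (by omega) (by omega)
    · intro h s hs hsk
      exact h (s + n) (by omega) (by omega)

theorem natCast_lt_absTime_shift_iff (hn : (n : ℕ∞) < absTime good F ω) {t : ℕ} :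
    (t : ℕ∞) < absTime good F (shift n ω) ↔ ((t + n : ℕ) : ℕ∞) < absTime good F ω := by
  rw [← absTime_shift_add hn, Nat.cast_add, ENat.add_lt_add_iff_right (ENat.natCast_ne_top n)]

theorem hitsF_shift_iff (hn : (n : ℕ∞) < absTime good F ω) :
    hitsF good F (shift n ω) ↔ hitsF good F ω := by
  constructor
  · rintro ⟨k, hk, hkF⟩
    exact ⟨k + n, by rw [← absTime_shift_add hn, hk, Nat.cast_add], hkF⟩
  · rintro ⟨k, hk, hkF⟩
    obtain ⟨m, rfl⟩ : ∃ m, k = m + n :=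
      Nat.exists_eq_add_of_le' (by rw [hk] at hn; exact_mod_cast hn.le)
    refine ⟨m, ?_, hkF⟩
    rwa [← absTime_shift_add hn, Nat.cast_add,
      (ENat.addLECancellable_natCast n).inj_left] at hk

theorem transCount_shift {x : S} (y : S) (hn : (n : ℕ∞) < absTime good F ω)
    (hx : ∀ t < n, ω t ≠ x) :
    transCount good F x y (shift n ω) = transCount good F x y ω := by
  unfold transCount
  refine Eq.trans ?_ (ENNReal.summable.sum_add_tsum_nat_add' (k := n))
  rw [Finset.sum_eq_zero, zero_add]
  · classical
    refine tsum_congr fun t => if_congr ?_ rfl rfl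
    rw [natCast_lt_absTime_shift_iff hn, shift, shift, add_right_comm]
  · intro t ht
    exact if_neg fun h => hx t (Finset.mem_range.1 ht) h.2.1

/-- The event that the trajectory is at `x` at time `n`, strictly before absorption. The event
that the first such visit is at time `n` is then `disjointed (visitAt good F x) n`. -/
def visitAt (good : S) (F : Set S) (x : S) (n : ℕ) : Set (ℕ → S) :=
  {ω | (n : ℕ∞) < absTime good F ω ∧ ω n = x}

theorem ne_of_mem_disjointed_visitAt {x : S} (h : ω ∈ disjointed (visitAt good F x) n) {t : ℕ}
    (ht : t < n) : ω t ≠ x := by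
  rw [disjointed_eq_inter_compl] at h
  have htn : (t : ℕ∞) < n := by exact_mod_cast ht
  exact fun hxt => Set.mem_iInter₂.1 h.2 t ht ⟨htn.trans h.1.1, hxt⟩

theorem transCount_eq_zero_of_notMem_iUnion_visitAt {x : S} (y : S)
    (h : ω ∉ ⋃ n, visitAt good F x n) : transCount good F x y ω = 0 :=
  ENNReal.tsum_eq_zero.2 fun t =>
    if_neg fun ht => h (Set.mem_iUnion.2 ⟨t, ht.1, ht.2.1⟩)

end Path

section Measurability

variable {S : Type*} [MeasurableSpace S]

theorem measurable_shift (n : ℕ) : Measurable (shift (S := S) n) :=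
  measurable_pi_lambda _ fun t => measurable_pi_apply (t + n)

theorem adapted_piLE_eval {ι : Type*} [Preorder ι] {X : ι → Type*}
    [∀ i, MeasurableSpace (X i)] : Adapted (Filtration.piLE (X := X)) fun i ω => ω i := by
  intro i
  have heval : Measurable fun b : (∀ j : Set.Iic i, X j) => b ⟨i, Set.self_mem_Iic⟩ :=
    measurable_pi_apply _
  have hrestrict : Measurable[Filtration.piLE i] (Preorder.restrictLe (π := X) i) :=
    comap_measurable _
  exact heval.comp hrestrict

theorem measurableSet_disjointed_of_filtration {Ω ι : Type*} {m : MeasurableSpace Ω}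
    [Preorder ι] [LocallyFiniteOrderBot ι] (𝓕 : Filtration ι m) {A : ι → Set Ω}
    (hA : ∀ i, MeasurableSet[𝓕 i] (A i)) (i : ι) : MeasurableSet[𝓕 i] (disjointed A i) := by
  rw [disjointed_eq_inter_compl]
  exact (hA i).inter <| .biInter (Set.finite_Iio i).countable fun j hj =>
    (𝓕.mono (le_of_lt hj) _ (hA j)).compl

variable [MeasurableSingletonClass S] {F : Set S}

theorem isStoppingTime_absTime (good : S) (hF : MeasurableSet F) :
    IsStoppingTime (Filtration.piLE (X := fun _ : ℕ => S)) (absTime good F) := by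
  rw [absTime_eq_hittingAfter]
  exact adapted_piLE_eval.isStoppingTime_hittingAfter (hF.insert good)

theorem measurableSet_piLE_visitAt (good : S) (hF : MeasurableSet F) (x : S) (n : ℕ) :
    MeasurableSet[Filtration.piLE (X := fun _ : ℕ => S) n] (visitAt good F x n) :=
  ((isStoppingTime_absTime good hF).measurableSet_gt n).inter
    (adapted_piLE_eval (X := fun _ : ℕ => S) n (measurableSet_singleton x))

theorem measurableSet_visitAt (good : S) (hF : MeasurableSet F) (x : S) (n : ℕ) :
    MeasurableSet (visitAt good F x n) :=
  Filtration.piLE.le n _ (measurableSet_piLE_visitAt good hF x n)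

theorem measurableSet_hitsF (good : S) (hF : MeasurableSet F) :
    MeasurableSet {ω : ℕ → S | hitsF good F ω} := by
  simp only [hitsF, Set.ofPred_exists]
  exact .iUnion fun n =>
    (Filtration.piLE.le n _ ((isStoppingTime_absTime good hF).measurableSet_eq n)).inter
      (measurable_pi_apply n hF)

theorem measurable_transCount (good : S) (hF : MeasurableSet F) (x y : S) :
    Measurable (transCount good F x y) := by
  refine .tsum fun t => .ite ?_ measurable_const measurable_const
  simp only [← and_assoc]
  exact (measurableSet_visitAt good hF x t).inter
    ((measurableSet_singleton y).preimage (measurable_pi_apply (X := fun _ => S) (t + 1)))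

theorem measurableSet_cylinder (f : ℕ → S) (n : ℕ) : MeasurableSet (PiNat.cylinder f n) := by
  simp only [PiNat.cylinder, Set.ofPred_forall]
  exact .iInter fun t => .iInter fun _ =>
    (measurableSet_singleton (f t)).preimage (measurable_pi_apply (X := fun _ => S) t)

variable [Countable S] {μ ν : Measure (ℕ → S)}

theorem map_frestrictLe_eq_of_cylinder {n : ℕ}
    (h : ∀ f, μ (PiNat.cylinder f (n + 1)) = ν (PiNat.cylinder f (n + 1))) :
    μ.map (Preorder.frestrictLe n) = ν.map (Preorder.frestrictLe n) := by
  refine Measure.ext_of_singleton fun b => ?_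
  obtain ⟨f, rfl⟩ : ∃ f : ℕ → S, Preorder.frestrictLe n f = b :=
    ⟨fun t => b ⟨min t n, by simp⟩, by ext t; simp [Finset.mem_Iic.1 t.2]⟩
  rw [Measure.map_apply (by fun_prop) (measurableSet_singleton _),
    Measure.map_apply (by fun_prop) (measurableSet_singleton _),
    preimage_frestrictLe_singleton, h]

theorem measure_eq_of_cylinder_of_piLE {n : ℕ}
    (h : ∀ f, μ (PiNat.cylinder f (n + 1)) = ν (PiNat.cylinder f (n + 1))) {A : Set (ℕ → S)}
    (hA : MeasurableSet[Filtration.piLE (X := fun _ : ℕ => S) n] A) : μ A = ν A := by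
  rw [Filtration.piLE_eq_comap_frestrictLe] at hA
  obtain ⟨B, hB, rfl⟩ := hA
  rw [← Measure.map_apply (by fun_prop) hB, ← Measure.map_apply (by fun_prop) hB,
    map_frestrictLe_eq_of_cylinder h]

theorem measure_ext_of_cylinder [IsFiniteMeasure ν]
    (h : ∀ n f, μ (PiNat.cylinder f (n + 1)) = ν (PiNat.cylinder f (n + 1))) : μ = ν := by
  have hproj : IsProjectiveMeasureFamily fun I : Finset ℕ => ν.map I.restrict := by
    intro I J hJI
    rw [Measure.map_map (by fun_prop) (by fun_prop)]
    rfl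
  have : IsProjectiveLimit μ fun I : Finset ℕ => ν.map I.restrict :=
    (isProjectiveLimit_nat_iff hproj μ).2 fun n => map_frestrictLe_eq_of_cylinder (h n)
  exact this.unique fun _ => rfl

end Measurability

section Markov

variable {S : Type*} [DecidableEq S] [MeasurableSpace S] {p : S → S → ℝ≥0∞}
  {ℙ : S → Measure (ℕ → S)}

/-- `ℙ z` is the law of the Markov chain with transition matrix `p` started at `z`, expressed
through the finite-dimensional distributions: `PiNat.cylinder f (n + 1)` prescribes the states at
times `0, …, n`. -/
def IsMarkovFamily (p : S → S → ℝ≥0∞) (ℙ : S → Measure (ℕ → S)) : Prop :=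
  ∀ z n f, ℙ z (PiNat.cylinder f (n + 1)) =
    (if f 0 = z then 1 else 0) * ∏ t ∈ Finset.range n, p (f t) (f (t + 1))

namespace IsMarkovFamily

theorem measure_cylinder_add (hℙ : IsMarkovFamily p ℙ) (z : S) (g : ℕ → S) (n m : ℕ) :
    ℙ z (PiNat.cylinder g (n + m + 1)) =
      ℙ z (PiNat.cylinder g (n + 1)) * ℙ (g n) (PiNat.cylinder (shift n g) (m + 1)) := by
  rw [hℙ, hℙ, hℙ, Finset.prod_range_add, mul_assoc]
  simp [shift, add_comm n, add_right_comm]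

variable [MeasurableSingletonClass S] [Countable S]

theorem map_eval_zero (hℙ : IsMarkovFamily p ℙ) (z : S) :
    (ℙ z).map (fun ω => ω 0) = Measure.dirac z := by
  refine Measure.ext_of_singleton fun s => ?_
  have hcyl : (fun ω : ℕ → S => ω 0) ⁻¹' {s} = PiNat.cylinder (fun _ => s) (0 + 1) := by
    ext ω
    simp [PiNat.mem_cylinder_iff]
  rw [Measure.map_apply (measurable_pi_apply 0) (measurableSet_singleton s), hcyl, hℙ,
    Measure.dirac_apply]
  simp [Set.indicator_apply, eq_comm]

theorem isProbabilityMeasure (hℙ : IsMarkovFamily p ℙ) (z : S) : IsProbabilityMeasure (ℙ z) := by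
  have : IsProbabilityMeasure ((ℙ z).map fun ω => ω 0) := by
    rw [hℙ.map_eval_zero]
    infer_instance
  exact Measure.isProbabilityMeasure_of_map fun ω => ω 0

theorem ae_eval_zero_eq (hℙ : IsMarkovFamily p ℙ) (z : S) : ∀ᵐ ω ∂ℙ z, ω 0 = z := by
  refine ae_of_ae_map (f := fun ω : ℕ → S => ω 0) (p := (· = z))
    (measurable_pi_apply 0).aemeasurable ?_
  rw [hℙ.map_eval_zero, ae_dirac_eq]
  rfl

theorem map_shift_restrict_cylinder (hℙ : IsMarkovFamily p ℙ) (z : S) (n : ℕ) (f : ℕ → S) :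
    ((ℙ z).restrict (PiNat.cylinder f (n + 1))).map (shift n) =
      ℙ z (PiNat.cylinder f (n + 1)) • ℙ (f n) := by
  have := hℙ.isProbabilityMeasure z
  have := hℙ.isProbabilityMeasure (f n)
  have := (ℙ (f n)).smul_finite (measure_ne_top (ℙ z) (PiNat.cylinder f (n + 1)))
  refine measure_ext_of_cylinder fun m h => ?_
  rw [Measure.map_apply (measurable_shift n) (measurableSet_cylinder _ _),
    Measure.restrict_apply (measurable_shift n (measurableSet_cylinder _ _)), Set.inter_comm,
    Measure.smul_apply, smul_eq_mul]
  by_cases hfh : h 0 = f n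
  · obtain ⟨g, hg, rfl⟩ := exists_mem_cylinder_shift_eq hfh
    rw [← PiNat.mem_cylinder_iff_eq.1 hg, cylinder_inter_preimage_shift_cylinder,
      hℙ.measure_cylinder_add, hg n n.lt_succ_self]
  · have hdisj : PiNat.cylinder f (n + 1) ∩ shift n ⁻¹' PiNat.cylinder h (m + 1) = ∅ := by
      refine Set.eq_empty_of_forall_notMem fun ω ⟨hpast, hfuture⟩ => hfh ?_
      rw [← hfuture 0 m.succ_pos, ← hpast n n.lt_succ_self, shift, zero_add]
    rw [hdisj, measure_empty, hℙ (f n), if_neg hfh, zero_mul, mul_zero]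

theorem measure_inter_preimage_shift (hℙ : IsMarkovFamily p ℙ) (z : S) {n : ℕ}
    {A D : Set (ℕ → S)} (hA : MeasurableSet[Filtration.piLE (X := fun _ : ℕ => S) n] A)
    (hD : MeasurableSet D) :
    ℙ z (A ∩ shift n ⁻¹' D) = ∫⁻ ω in A, ℙ (ω n) D ∂ℙ z := by
  have hA' : MeasurableSet A := Filtration.piLE.le n _ hA
  rw [← Measure.restrict_apply hA', ← withDensity_apply _ hA']
  refine measure_eq_of_cylinder_of_piLE (fun f => ?_) hA
  have hf := measurableSet_cylinder f (n + 1)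
  calc (ℙ z).restrict (shift n ⁻¹' D) (PiNat.cylinder f (n + 1))
    _ = ((ℙ z).restrict (PiNat.cylinder f (n + 1))).map (shift n) D := by
      rw [Measure.map_apply (measurable_shift n) hD, Measure.restrict_apply hf,
        Measure.restrict_apply (measurable_shift n hD), Set.inter_comm]
    _ = ∫⁻ _ in PiNat.cylinder f (n + 1), ℙ (f n) D ∂ℙ z := by
      rw [hℙ.map_shift_restrict_cylinder, setLIntegral_const, mul_comm]
      rfl
    _ = ∫⁻ ω in PiNat.cylinder f (n + 1), ℙ (ω n) D ∂ℙ z :=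
      setLIntegral_congr_fun hf fun ω hω => by rw [hω n n.lt_succ_self]
    _ = (ℙ z).withDensity (fun ω => ℙ (ω n) D) (PiNat.cylinder f (n + 1)) :=
      (withDensity_apply _ hf).symm

theorem map_shift_restrict (hℙ : IsMarkovFamily p ℙ) (z : S) {x : S} {n : ℕ} {A : Set (ℕ → S)}
    (hA : MeasurableSet[Filtration.piLE (X := fun _ : ℕ => S) n] A) (hAx : ∀ ω ∈ A, ω n = x) :
    ((ℙ z).restrict A).map (shift n) = ℙ z A • ℙ x := by
  have hA' : MeasurableSet A := Filtration.piLE.le n _ hA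
  ext D hD
  calc ((ℙ z).restrict A).map (shift n) D
    _ = ℙ z (A ∩ shift n ⁻¹' D) := by
      rw [Measure.map_apply (measurable_shift n) hD,
        Measure.restrict_apply (measurable_shift n hD), Set.inter_comm]
    _ = ∫⁻ ω in A, ℙ (ω n) D ∂ℙ z := hℙ.measure_inter_preimage_shift z hA hD
    _ = ∫⁻ _ in A, ℙ x D ∂ℙ z := setLIntegral_congr_fun hA' fun ω hω => by rw [hAx ω hω]
    _ = (ℙ z A • ℙ x) D := by rw [setLIntegral_const, mul_comm]; rfl

theorem lintegral_eq_measure_iUnion_mul (hℙ : IsMarkovFamily p ℙ) (z : S) {x : S}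
    {A : ℕ → Set (ℕ → S)}
    (hA : ∀ n, MeasurableSet[Filtration.piLE (X := fun _ : ℕ => S) n] (A n))
    (hdisj : Pairwise (Function.onFun Disjoint A)) (hAx : ∀ n, ∀ ω ∈ A n, ω n = x)
    {G : (ℕ → S) → ℝ≥0∞} (hG : Measurable G) (hshift : ∀ n, ∀ ω ∈ A n, G (shift n ω) = G ω)
    (hzero : ∀ ω ∉ ⋃ n, A n, G ω = 0) :
    ∫⁻ ω, G ω ∂ℙ z = ℙ z (⋃ n, A n) * ∫⁻ ω, G ω ∂ℙ x := by
  have hA' n : MeasurableSet (A n) := Filtration.piLE.le n _ (hA n)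
  have hpiece n : ∫⁻ ω in A n, G ω ∂ℙ z = ℙ z (A n) * ∫⁻ ω, G ω ∂ℙ x :=
    calc ∫⁻ ω in A n, G ω ∂ℙ z
      _ = ∫⁻ ω in A n, G (shift n ω) ∂ℙ z :=
        setLIntegral_congr_fun (hA' n) fun ω hω => (hshift n ω hω).symm
      _ = ∫⁻ ω, G ω ∂((ℙ z).restrict (A n)).map (shift n) :=
        (lintegral_map hG (measurable_shift n)).symm
      _ = ℙ z (A n) * ∫⁻ ω, G ω ∂ℙ x := by
        rw [hℙ.map_shift_restrict z (hA n) (hAx n), lintegral_smul_measure, smul_eq_mul]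
  calc ∫⁻ ω, G ω ∂ℙ z
    _ = ∫⁻ ω in ⋃ n, A n, G ω ∂ℙ z :=
      (setLIntegral_eq_of_support_subset (Function.support_subset_iff'.2 hzero)).symm
    _ = ∑' n, ℙ z (A n) * ∫⁻ ω, G ω ∂ℙ x := by
      rw [lintegral_iUnion hA' hdisj]
      exact tsum_congr hpiece
    _ = ℙ z (⋃ n, A n) * ∫⁻ ω, G ω ∂ℙ x := by
      rw [ENNReal.tsum_mul_right, measure_iUnion hdisj hA']

theorem setLIntegral_hitsF_transCount (hℙ : IsMarkovFamily p ℙ) (good : S) (F : Set S)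
    (z x y : S) :
    ∫⁻ ω in {ω | hitsF good F ω}, transCount good F x y ω ∂ℙ z =
      ℙ z (⋃ n, visitAt good F x n) *
        ∫⁻ ω in {ω | hitsF good F ω}, transCount good F x y ω ∂ℙ x := by
  have hF : MeasurableSet F := .of_discrete
  have hhits := measurableSet_hitsF good hF
  have hmem n ω (hω : ω ∈ disjointed (visitAt good F x) n) : ω ∈ visitAt good F x n :=
    disjointed_subset _ n hω
  rw [← lintegral_indicator hhits, ← lintegral_indicator hhits, ← iUnion_disjointed]
  refine hℙ.lintegral_eq_measure_iUnion_mul z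
    (measurableSet_disjointed_of_filtration _ (measurableSet_piLE_visitAt good hF x))
    (disjoint_disjointed _) (fun n ω hω => (hmem n ω hω).2)
    ((measurable_transCount good hF x y).indicator hhits) (fun n ω hω => ?_) fun ω hω => ?_
  · have hn := (hmem n ω hω).1
    classical
    rw [Set.indicator_apply, Set.indicator_apply]
    exact if_congr (hitsF_shift_iff hn)
      (transCount_shift y hn fun t => ne_of_mem_disjointed_visitAt hω) rfl
  · rw [iUnion_disjointed] at hω
    exact Set.indicator_apply_eq_zero.2 fun _ =>
      transCount_eq_zero_of_notMem_iUnion_visitAt y hω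

end IsMarkovFamily

end Markov

theorem expectation_from_good_eq_reach_mul_general
    {S : Type*} [Countable S] [DecidableEq S] [MeasurableSpace S] [MeasurableSingletonClass S]
    {p : S → S → ℝ≥0∞} {ℙ : S → Measure (ℕ → S)} (hℙ : IsMarkovFamily p ℙ)
    (good : S) (F : Set S) {z x : S} (hzx : z ≠ x) (y : S) :
    ∫⁻ ω in {ω | hitsF good F ω}, transCount good F x y ω ∂(ℙ z) =
      ℙ z {ω | ∃ t : ℕ, 0 < t ∧ (t : ℕ∞) < absTime good F ω ∧ ω t = x} *
        ∫⁻ ω in {ω | hitsF good F ω}, transCount good F x y ω ∂(ℙ x) := by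
  rw [hℙ.setLIntegral_hitsF_transCount]
  congr 1
  refine measure_congr ?_
  filter_upwards [hℙ.ae_eval_zero_eq z] with ω hω
  refine propext (Set.mem_iUnion.trans (exists_congr fun t => ?_))
  have hpos (hxt : ω t = x) : 0 < t :=
    Nat.pos_of_ne_zero fun ht => hzx (by rw [← hω, ← hxt, ht])
  exact ⟨fun h => ⟨hpos h.2, h⟩, fun h => h.2⟩

/-- Key identity in the proof of the Corollary: for every internal state `x` and every `y`,
`E[1_A ⬝ N(x,y) | X 0 = 0] = f(0,x) ⬝ E[1_A ⬝ N(x,y) | X 0 = x]`, where `f(0,x)` is the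
probability that the chain started at the good state visits `x` strictly before absorption. -/
theorem expectation_from_good_eq_reach_mul
    {S : Type*} [Fintype S] [DecidableEq S] [MeasurableSpace S] [DiscreteMeasurableSpace S]
    (good : S) (F : Set S) (hgF : good ∉ F)
    (p : S → S → ℝ≥0∞) (hrow : ∀ x, ∑ y, p x y = 1)
    (hpgg : p good good = 0) (hpgF : ∀ y ∈ F, p good y = 0)
    (ℙ : S → Measure (ℕ → S)) (hprob : ∀ x, IsProbabilityMeasure (ℙ x))
    -- `ℙ x` is the law of the Markov chain with transition matrix `p` started at `x`
    (hcyl : ∀ x (n : ℕ) (f : ℕ → S),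
      ℙ x {ω | ∀ i ≤ n, ω i = f i} =
        (if f 0 = x then 1 else 0) * ∏ i ∈ Finset.range n, p (f i) (f (i + 1)))
    -- from every state the chain is absorbed in `{good} ∪ F` in finite time a.s.
    (habs : ∀ z, ℙ z {ω | absTime good F ω ≠ ⊤} = 1)
    (x : S) (hx : x ≠ good ∧ x ∉ F) (y : S) :
    ∫⁻ ω in {ω | hitsF good F ω}, transCount good F x y ω ∂(ℙ good) =
      ℙ good {ω | ∃ t : ℕ, 0 < t ∧ (t : ℕ∞) < absTime good F ω ∧ ω t = x} *
        ∫⁻ ω in {ω | hitsF good F ω}, transCount good F x y ω ∂(ℙ x) := by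
  exact expectation_from_good_eq_reach_mul_general (p := p) (fun z n f => by
    simpa only [PiNat.cylinder, Nat.lt_succ_iff] using hcyl z n f) good F hx.1.symm y
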